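/- If f : H_M → H_N is a contraction map and x, y ∈ H_M satisfy 0 ≤ d_α(x,y) − d_β(f(x),f(y)) ≤ 1, then every vertex z ∈ H_M on a Hamming path between x and y maps to a vertex f(z) on a Hamming path between f(x) and f(y); that is, f(z)_r = f(x)_r for every coordinate r ∈ [N] with f(x)_r = f(y)_r. -/

import Mathlib

open Finset

/-- Weighted Hamming distance on the hypercube `{0,1}^M` (bits modeled as `Bool`):
`d_γ(x,y) = Σ_i γ_i |x_i - y_i|`. -/
def hamDist {M : ℕ} (γ : Fin M → ℤ) (x y : Fin M → Bool) : ℤ :=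
  ∑ i, if x i = y i then 0 else γ i

/-- `z` is on a Hamming path between `x` and `y`: `z` agrees with `x` (and `y`)
on every coordinate where `x` and `y` agree. -/
def onHamPath {M : ℕ} (x y z : Fin M → Bool) : Prop :=
  ∀ k, x k = y k → z k = x k

/-!
On the Boolean cube the detour through `z` on the way from `x` to `y` costs exactly
`2 ∑ γ k`, summed over the coordinates `k` on which `x` and `y` agree but `z` differs: every other
coordinate is flipped as often on the detour as on the direct way. For `z` on a Hamming path
between `x` and `y` this cost vanishes, so a contraction `f` bounds the cost of the detour through
`f z` by `d_α(x, y) - d_β(f x, f y)`. If `f z` left the Hamming paths at `r`, that cost would be at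
least `2 β r`.
-/

section HammingDistance

variable {M : ℕ} (γ : Fin M → ℤ)

theorem hamDist_add_hamDist_eq_add_two_mul_sum (x y z : Fin M → Bool) :
    hamDist γ x z + hamDist γ z y =
      hamDist γ x y + 2 * ∑ k with x k = y k ∧ z k ≠ x k, γ k := by
  simp only [hamDist, sum_filter, mul_sum, ← sum_add_distrib]
  refine sum_congr rfl fun k _ => ?_
  cases x k <;> cases y k <;> cases z k <;> simp [two_mul]

theorem onHamPath.hamDist_add_hamDist {x y z : Fin M → Bool} (hz : onHamPath x y z) :
    hamDist γ x z + hamDist γ z y = hamDist γ x y := by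
  have no_detour : ({k | x k = y k ∧ z k ≠ x k} : Finset (Fin M)) = ∅ :=
    filter_eq_empty_iff.2 fun k _ ⟨hxy, hzx⟩ => hzx (hz k hxy)
  rw [hamDist_add_hamDist_eq_add_two_mul_sum, no_detour, sum_empty, mul_zero, add_zero]

variable {γ} in
theorem hamDist_add_two_mul_le_hamDist_add_hamDist (hγ : ∀ k, 0 ≤ γ k)
    {x y z : Fin M → Bool} {r : Fin M} (hxy : x r = y r) (hzx : z r ≠ x r) :
    hamDist γ x y + 2 * γ r ≤ hamDist γ x z + hamDist γ z y := by
  rw [hamDist_add_hamDist_eq_add_two_mul_sum]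
  gcongr
  exact single_le_sum (fun k _ => hγ k) (mem_filter.2 ⟨mem_univ r, hxy, hzx⟩)

end HammingDistance

theorem stmt_4_general {M N : ℕ} {α : Fin M → ℤ} {β : Fin N → ℤ} (hβ : ∀ r, 0 ≤ β r)
    {f : (Fin M → Bool) → (Fin N → Bool)}
    (hf : ∀ x x', hamDist β (f x) (f x') ≤ hamDist α x x')
    {x y z : Fin M → Bool} (hz : onHamPath x y z) {r : Fin N} (hr : f x r = f y r)
    (hgap : hamDist α x y - hamDist β (f x) (f y) < 2 * β r) :
    f z r = f x r := by
  by_contra hne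
  refine hgap.not_ge (le_sub_iff_add_le'.2 ?_)
  calc hamDist β (f x) (f y) + 2 * β r
      ≤ hamDist β (f x) (f z) + hamDist β (f z) (f y) :=
        hamDist_add_two_mul_le_hamDist_add_hamDist hβ hr hne
    _ ≤ hamDist α x z + hamDist α z y := add_le_add (hf x z) (hf z y)
    _ = hamDist α x y := hz.hamDist_add_hamDist α

theorem stmt_4 {M N : ℕ} (α : Fin M → ℤ) (β : Fin N → ℤ)
    (hα : ∀ i, 1 ≤ α i) (hβ : ∀ r, 1 ≤ β r)
    (f : (Fin M → Bool) → (Fin N → Bool))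
    (hf : ∀ x x', hamDist β (f x) (f x') ≤ hamDist α x x')
    (x y : Fin M → Bool)
    (h0 : 0 ≤ hamDist α x y - hamDist β (f x) (f y))
    (h1 : hamDist α x y - hamDist β (f x) (f y) ≤ 1)
    (z : Fin M → Bool) (hz : onHamPath x y z) :
    onHamPath (f x) (f y) (f z) := fun r hr =>
  stmt_4_general (fun k => zero_le_one.trans (hβ k)) hf hz hr (by linarith [hβ r])
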